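/- Let G be a connected finite simple graph on n ≥ 2 vertices with adjacency matrix A, minimum degree δ ≥ 1, and maximum degree Δ, and suppose Δ/δ ≤ 8/7. Let S be the diagonal matrix with S_ii = Δ − deg(v_i) (weighted self-loops). Then A + S has all row sums equal to Δ (i.e., the resulting multigraph is Δ-regular), and λ₂ of the normalized version of A + S is at most λ₂ of the normalized version of A, plus 6/7. -/

import Mathlib

/-!
Let `r i` be the row sums of a symmetric matrix `B`, let `0 < δ ≤ r i ≤ Δ`, and let `N` be the
normalized version of `B`. The second singular value behaves well under two operations:
`λ₂(T N Tᴴ) ≤ ‖T‖² λ₂(N)` and `λ₂(B + S) ≤ λ₂(B) + ‖S‖`. Since `B = T N T` for `T = diag (√(r i))`,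
where `‖T‖² ≤ Δ`, and `S = diag (Δ - r i)` has norm at most `Δ - δ`, this gives
`λ₂(B + S) ≤ Δ λ₂(N) + (Δ - δ)`. As `B + S` has constant row sums `Δ`, its normalized version is
`Δ⁻¹ (B + S)`, so `λ₂` grows by at most `1 - δ / Δ`, which is at most `1 / 8` when `Δ / δ ≤ 8 / 7`.

Both inequalities come from a Courant–Fischer argument for `λ₂`: some hyperplane is stretched by at
most `λ₂`, while every hyperplane meets the span of two top eigenvectors, so contains a nonzero
vector that is stretched by at least `λ₂`.
-/

open scoped Classical in
/-- `lambda2 M` is the second largest among the absolute values of the eigenvalues of the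
real symmetric matrix `M`, counted with multiplicity (and `0` if `M` is not symmetric). -/
noncomputable def lambda2 {n : ℕ} (M : Matrix (Fin n) (Fin n) ℝ) : ℝ :=
  if h : M.IsHermitian then
    ((List.ofFn fun i => |h.eigenvalues i|).insertionSort (· ≥ ·)).getD 1 0
  else 0

/-- The normalized version `D⁻¹ᐟ² B D⁻¹ᐟ²` of a matrix `B`, where `D` is the diagonal
matrix of row sums of `B`. -/
noncomputable def normalized {n : ℕ} (B : Matrix (Fin n) (Fin n) ℝ) :
    Matrix (Fin n) (Fin n) ℝ :=
  Matrix.diagonal (fun i => (∑ j, B i j) ^ (-(1 : ℝ) / 2)) * B *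
    Matrix.diagonal (fun i => (∑ j, B i j) ^ (-(1 : ℝ) / 2))

section SecondLargest

variable {α : Type*} [LinearOrder α] {n : ℕ}

theorem exists_perm_antitone_insertionSort_ofFn [DecidableRel ((· ≥ ·) : α → α → Prop)]
    (f : Fin n → α) :
    ∃ σ : Equiv.Perm (Fin n), Antitone (f ∘ σ) ∧
      (List.ofFn f).insertionSort (· ≥ ·) = List.ofFn (f ∘ σ) := by
  set σ := Tuple.sort (OrderDual.toDual ∘ f)
  have hσ : Antitone (f ∘ σ) := fun _ _ hij => Tuple.monotone_sort (OrderDual.toDual ∘ f) hij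
  exact ⟨σ, hσ, List.Perm.eq_of_pairwise' (List.pairwise_insertionSort _ _)
    hσ.sortedGE_ofFn.pairwise
    ((List.perm_insertionSort _ _).trans (σ.ofFn_comp_perm f).symm)⟩

theorem exists_index_insertionSort_getD_one [DecidableRel ((· ≥ ·) : α → α → Prop)]
    (hn : 2 ≤ n) (f : Fin n → α) (d : α) :
    ∃ i₀ i₁ : Fin n, i₀ ≠ i₁ ∧ ((List.ofFn f).insertionSort (· ≥ ·)).getD 1 d = f i₁ ∧
      f i₁ ≤ f i₀ ∧ ∀ i, i ≠ i₀ → f i ≤ f i₁ := by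
  obtain ⟨σ, hσ, hsort⟩ := exists_perm_antitone_insertionSort_ofFn f
  have : NeZero n := ⟨by omega⟩
  let one : Fin n := ⟨1, hn⟩
  refine ⟨σ 0, σ one, σ.injective.ne (by simp [one, Fin.ext_iff]), ?_, hσ (Fin.zero_le one),
    fun i hi => ?_⟩
  · rw [hsort, List.getD_eq_getElem _ _ (by simpa using Nat.lt_of_succ_le hn)]
    simp [one]
  · have hpos : σ.symm i ≠ 0 := fun h => hi (by rw [← h, σ.apply_symm_apply])
    simpa using hσ (show one ≤ σ.symm i from Nat.one_le_iff_ne_zero.mpr (Fin.val_ne_iff.mpr hpos))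

end SecondLargest

section Eigenbasis

variable {ι 𝕜 E : Type*} [Fintype ι] [RCLike 𝕜] [NormedAddCommGroup E] [InnerProductSpace 𝕜 E]

theorem inner_map_of_eigenbasis (b : OrthonormalBasis ι 𝕜 E) {T : E →ₗ[𝕜] E} {μ : ι → 𝕜}
    (hT : ∀ i, T (b i) = μ i • b i) (x : E) (i : ι) :
    inner 𝕜 (b i) (T x) = μ i * inner 𝕜 (b i) x := by
  classical
  conv_lhs => rw [← b.sum_repr' x]
  simp [hT, inner_sum, inner_smul_right, orthonormal_iff_ite.mp b.orthonormal, mul_comm]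

theorem norm_map_sq_of_eigenbasis (b : OrthonormalBasis ι 𝕜 E) {T : E →ₗ[𝕜] E} {μ : ι → 𝕜}
    (hT : ∀ i, T (b i) = μ i • b i) (x : E) :
    ‖T x‖ ^ 2 = ∑ i, ‖μ i‖ ^ 2 * ‖inner 𝕜 (b i) x‖ ^ 2 := by
  simp only [← b.sum_sq_norm_inner_right (T x), inner_map_of_eigenbasis b hT, norm_mul, mul_pow]

theorem norm_map_le_of_eigenbasis (b : OrthonormalBasis ι 𝕜 E) {T : E →ₗ[𝕜] E} {μ : ι → 𝕜}
    (hT : ∀ i, T (b i) = μ i • b i) {c : ℝ} (hc : 0 ≤ c) {x : E}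
    (hμ : ∀ i, inner 𝕜 (b i) x ≠ 0 → ‖μ i‖ ≤ c) : ‖T x‖ ≤ c * ‖x‖ := by
  refine le_of_sq_le_sq ?_ (by positivity)
  rw [norm_map_sq_of_eigenbasis b hT, mul_pow, ← b.sum_sq_norm_inner_right x, Finset.mul_sum]
  refine Finset.sum_le_sum fun i _ => ?_
  by_cases hi : inner 𝕜 (b i) x = 0
  · simp [hi]
  · gcongr
    exact hμ i hi

theorem le_norm_map_of_eigenbasis (b : OrthonormalBasis ι 𝕜 E) {T : E →ₗ[𝕜] E} {μ : ι → 𝕜}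
    (hT : ∀ i, T (b i) = μ i • b i) {c : ℝ} (hc : 0 ≤ c) {x : E}
    (hμ : ∀ i, inner 𝕜 (b i) x ≠ 0 → c ≤ ‖μ i‖) : c * ‖x‖ ≤ ‖T x‖ := by
  refine le_of_sq_le_sq ?_ (norm_nonneg _)
  rw [norm_map_sq_of_eigenbasis b hT, mul_pow, ← b.sum_sq_norm_inner_right x, Finset.mul_sum]
  refine Finset.sum_le_sum fun i _ => ?_
  by_cases hi : inner 𝕜 (b i) x = 0
  · simp [hi]
  · gcongr
    exact hμ i hi

theorem exists_ne_zero_mem_span_pair_inner_eq_zero {v₀ v₁ : E}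
    (hv : LinearIndependent 𝕜 ![v₀, v₁]) (w : E) :
    ∃ x ∈ Submodule.span 𝕜 {v₀, v₁}, x ≠ 0 ∧ inner 𝕜 w x = 0 := by
  by_cases h₁ : inner 𝕜 w v₁ = 0
  · exact ⟨v₁, Submodule.subset_span (by simp), hv.ne_zero 1, h₁⟩
  · refine ⟨inner 𝕜 w v₁ • v₀ + -inner 𝕜 w v₀ • v₁, Submodule.mem_span_pair.mpr ⟨_, _, rfl⟩,
      fun h => h₁ (LinearIndependent.pair_iff.mp hv _ _ h).1, ?_⟩
    rw [inner_add_right, inner_smul_right, inner_smul_right]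
    ring

end Eigenbasis

section Matrices

open Matrix
open scoped Matrix.Norms.L2Operator

variable {ι 𝕜 : Type*} [Fintype ι] [DecidableEq ι] [RCLike 𝕜]

theorem norm_toEuclideanCLM_le (M : Matrix ι ι 𝕜) (x : EuclideanSpace 𝕜 ι) :
    ‖toEuclideanCLM (𝕜 := 𝕜) M x‖ ≤ ‖M‖ * ‖x‖ :=
  (toEuclideanCLM (𝕜 := 𝕜) M).le_opNorm x

theorem l2_opNorm_diagonal_le {v : ι → 𝕜} {c : ℝ} (hc : 0 ≤ c) (hv : ∀ i, ‖v i‖ ≤ c) :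
    ‖diagonal v‖ ≤ c := by
  rwa [l2_opNorm_diagonal, pi_norm_le_iff_of_nonneg hc]

theorem toEuclideanCLM_eigenvectorBasis {M : Matrix ι ι 𝕜} (hM : M.IsHermitian) (i : ι) :
    toEuclideanCLM (𝕜 := 𝕜) M (hM.eigenvectorBasis i) =
      (hM.eigenvalues i : 𝕜) • hM.eigenvectorBasis i :=
  WithLp.ofLp_injective 2 <| (hM.mulVec_eigenvectorBasis i).trans
    (RCLike.real_smul_eq_coe_smul (K := 𝕜) _ _)

theorem sum_add_diagonal_sub {R : Type*} [AddCommGroup R] {B : Matrix ι ι R} {r : ι → R}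
    (hr : ∀ i, ∑ j, B i j = r i) (Δ : R) (i : ι) :
    ∑ j, (B + diagonal fun v => Δ - r v) i j = Δ := by
  simp [Finset.sum_add_distrib, hr, diagonal_apply]

end Matrices

section Lambda2

open Matrix
open scoped Matrix.Norms.L2Operator

variable {n : ℕ} {M N : Matrix (Fin n) (Fin n) ℝ}

theorem lambda2_nonneg (M : Matrix (Fin n) (Fin n) ℝ) : 0 ≤ lambda2 M := by
  classical
  unfold lambda2
  split_ifs with hM
  · set l := (List.ofFn fun i => |hM.eigenvalues i|).insertionSort (· ≥ ·)
    have hl : ∀ a ∈ l, 0 ≤ a := by simp [l, List.mem_ofFn]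
    rcases lt_or_ge 1 l.length with h | h
    · rw [List.getD_eq_getElem _ _ h]
      exact hl _ (List.getElem_mem h)
    · rw [List.getD_eq_default _ _ h]
  · exact le_rfl

theorem exists_index_lambda2 (hn : 2 ≤ n) (hM : M.IsHermitian) :
    ∃ i₀ i₁ : Fin n, i₀ ≠ i₁ ∧ lambda2 M = |hM.eigenvalues i₁| ∧
      |hM.eigenvalues i₁| ≤ |hM.eigenvalues i₀| ∧
      ∀ i, i ≠ i₀ → |hM.eigenvalues i| ≤ |hM.eigenvalues i₁| := by
  classical
  rw [lambda2, dif_pos hM]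
  exact exists_index_insertionSort_getD_one hn (fun i => |hM.eigenvalues i|) 0

theorem exists_forall_orthogonal_norm_le_lambda2_mul (hn : 2 ≤ n) (hM : M.IsHermitian) :
    ∃ u : EuclideanSpace ℝ (Fin n), ∀ x, inner ℝ u x = 0 →
      ‖toEuclideanCLM (𝕜 := ℝ) M x‖ ≤ lambda2 M * ‖x‖ := by
  obtain ⟨i₀, i₁, -, hlam, -, hle⟩ := exists_index_lambda2 hn hM
  refine ⟨hM.eigenvectorBasis i₀, fun x hx => norm_map_le_of_eigenbasis hM.eigenvectorBasis
    (T := (toEuclideanCLM (𝕜 := ℝ) M).toLinearMap) (toEuclideanCLM_eigenvectorBasis hM)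
    (lambda2_nonneg M) fun i hi => ?_⟩
  rw [hlam]
  exact hle i fun h => hi (h ▸ hx)

theorem exists_orthogonal_lambda2_mul_le_norm (hn : 2 ≤ n) (hM : M.IsHermitian)
    (w : EuclideanSpace ℝ (Fin n)) :
    ∃ x : EuclideanSpace ℝ (Fin n), x ≠ 0 ∧ inner ℝ w x = 0 ∧
      lambda2 M * ‖x‖ ≤ ‖toEuclideanCLM (𝕜 := ℝ) M x‖ := by
  obtain ⟨i₀, i₁, hne, hlam, hle, -⟩ := exists_index_lambda2 hn hM
  set b := hM.eigenvectorBasis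
  have hpair : LinearIndependent ℝ ![b i₀, b i₁] := by
    rw [show ![b i₀, b i₁] = b ∘ ![i₀, i₁] from FinVec.map_eq b ![i₀, i₁]]
    exact b.orthonormal.linearIndependent.comp _ (injective_pair_iff_ne.mpr hne)
  obtain ⟨x, hx, hx0, hwx⟩ := exists_ne_zero_mem_span_pair_inner_eq_zero hpair w
  refine ⟨x, hx0, hwx, ?_⟩
  refine le_norm_map_of_eigenbasis b (T := (toEuclideanCLM (𝕜 := ℝ) M).toLinearMap)
    (toEuclideanCLM_eigenvectorBasis hM) (lambda2_nonneg M) fun i hi => ?_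
  obtain ⟨p, q, rfl⟩ := Submodule.mem_span_pair.mp hx
  have hi' : i = i₀ ∨ i = i₁ := by
    by_contra! h
    simp [inner_add_right, inner_smul_right, b.inner_eq_ite, h.1, h.2] at hi
  rcases hi' with rfl | rfl
  · exact hlam.trans_le hle
  · exact hlam.le

theorem lambda2_le_of_forall_orthogonal (hn : 2 ≤ n) (hM : M.IsHermitian)
    {c : ℝ} (w : EuclideanSpace ℝ (Fin n))
    (h : ∀ x, inner ℝ w x = 0 → ‖toEuclideanCLM (𝕜 := ℝ) M x‖ ≤ c * ‖x‖) :
    lambda2 M ≤ c := by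
  obtain ⟨x, hx0, hwx, hx⟩ := exists_orthogonal_lambda2_mul_le_norm hn hM w
  exact le_of_mul_le_mul_right (hx.trans (h x hwx)) (norm_pos_iff.mpr hx0)

theorem lambda2_add_le (hn : 2 ≤ n) (hM : M.IsHermitian) (hN : N.IsHermitian) :
    lambda2 (M + N) ≤ lambda2 M + ‖N‖ := by
  obtain ⟨u, hu⟩ := exists_forall_orthogonal_norm_le_lambda2_mul hn hM
  refine lambda2_le_of_forall_orthogonal hn (hM.add hN) u fun x hx => ?_
  rw [map_add, _root_.add_apply, add_mul]
  exact norm_add_le_of_le (hu x hx) (norm_toEuclideanCLM_le N x)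

theorem lambda2_smul_le (hn : 2 ≤ n) (hM : M.IsHermitian) (c : ℝ) :
    lambda2 (c • M) ≤ |c| * lambda2 M := by
  obtain ⟨u, hu⟩ := exists_forall_orthogonal_norm_le_lambda2_mul hn hM
  refine lambda2_le_of_forall_orthogonal hn (hM.smul (.all c)) u fun x hx => ?_
  rw [map_smul, _root_.smul_apply, norm_smul, Real.norm_eq_abs, mul_assoc]
  gcongr
  exact hu x hx

theorem lambda2_mul_mul_conjTranspose_le (hn : 2 ≤ n) (hM : M.IsHermitian)
    (T : Matrix (Fin n) (Fin n) ℝ) : lambda2 (T * M * Tᴴ) ≤ ‖T‖ ^ 2 * lambda2 M := by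
  obtain ⟨u, hu⟩ := exists_forall_orthogonal_norm_le_lambda2_mul hn hM
  refine lambda2_le_of_forall_orthogonal hn (isHermitian_mul_mul_conjTranspose T hM)
    (toEuclideanCLM (𝕜 := ℝ) T u) fun x hx => ?_
  have hux : inner ℝ u (toEuclideanCLM (𝕜 := ℝ) Tᴴ x) = 0 := by
    rwa [← star_eq_conjTranspose, map_star, ContinuousLinearMap.star_eq_adjoint,
      ContinuousLinearMap.adjoint_inner_right]
  have hlam := lambda2_nonneg M
  calc ‖toEuclideanCLM (𝕜 := ℝ) (T * M * Tᴴ) x‖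
      = ‖toEuclideanCLM (𝕜 := ℝ) T
          (toEuclideanCLM (𝕜 := ℝ) M (toEuclideanCLM (𝕜 := ℝ) Tᴴ x))‖ := by
        simp only [map_mul, mul_apply_eq_comp]
    _ ≤ ‖T‖ * (lambda2 M * (‖Tᴴ‖ * ‖x‖)) := by
        grw [norm_toEuclideanCLM_le T, hu _ hux, norm_toEuclideanCLM_le Tᴴ]
    _ = ‖T‖ ^ 2 * lambda2 M * ‖x‖ := by rw [l2_opNorm_conjTranspose]; ring

end Lambda2

section Normalized

open Matrix
open scoped Matrix.Norms.L2Operator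

variable {n : ℕ} {B : Matrix (Fin n) (Fin n) ℝ} {r : Fin n → ℝ}

theorem normalized_isHermitian (hB : B.IsHermitian) : (normalized B).IsHermitian := by
  have h := isHermitian_mul_mul_conjTranspose
    (diagonal fun i => (∑ j, B i j) ^ (-(1 : ℝ) / 2)) hB
  rwa [(isHermitian_diagonal _).eq] at h

theorem diagonal_sqrt_mul_normalized_mul (hr : ∀ i, ∑ j, B i j = r i) (hpos : ∀ i, 0 < r i) :
    diagonal (fun i => √(r i)) * normalized B * diagonal (fun i => √(r i)) = B := by
  have hcancel : ∀ i, √(r i) * r i ^ (-(1 : ℝ) / 2) = 1 := fun i => by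
    rw [Real.sqrt_eq_rpow, ← Real.rpow_add (hpos i)]
    norm_num
  ext i j
  simp only [normalized, hr, mul_diagonal, diagonal_mul]
  linear_combination B i j * (√(r j) * r j ^ (-(1 : ℝ) / 2)) * hcancel i + B i j * hcancel j

theorem normalized_eq_inv_smul {Δ : ℝ} (hΔ : 0 < Δ) (hB : ∀ i, ∑ j, B i j = Δ) :
    normalized B = Δ⁻¹ • B := by
  have hsq : Δ ^ (-(1 : ℝ) / 2) * Δ ^ (-(1 : ℝ) / 2) = Δ⁻¹ := by
    rw [← Real.rpow_add hΔ, ← Real.rpow_neg_one]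
    norm_num
  ext i j
  simp only [normalized, hB, mul_diagonal, diagonal_mul, Matrix.smul_apply, smul_eq_mul]
  linear_combination B i j * hsq

theorem lambda2_le_mul_lambda2_normalized (hn : 2 ≤ n) (hB : B.IsHermitian)
    (hr : ∀ i, ∑ j, B i j = r i) (hpos : ∀ i, 0 < r i) {Δ : ℝ} (hΔ : ∀ i, r i ≤ Δ) :
    lambda2 B ≤ Δ * lambda2 (normalized B) := by
  set T : Matrix (Fin n) (Fin n) ℝ := diagonal fun i => √(r i)
  have hΔ0 : 0 ≤ Δ := (hpos ⟨0, by omega⟩).le.trans (hΔ _)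
  have hT : ‖T‖ ≤ √Δ := l2_opNorm_diagonal_le (Real.sqrt_nonneg Δ) fun i => by
    rw [Real.norm_of_nonneg (Real.sqrt_nonneg _)]
    exact Real.sqrt_le_sqrt (hΔ i)
  have hlam := lambda2_nonneg (normalized B)
  calc lambda2 B = lambda2 (T * normalized B * Tᴴ) := by
        rw [(isHermitian_diagonal _).eq, diagonal_sqrt_mul_normalized_mul hr hpos]
    _ ≤ ‖T‖ ^ 2 * lambda2 (normalized B) :=
        lambda2_mul_mul_conjTranspose_le hn (normalized_isHermitian hB) T
    _ ≤ √Δ ^ 2 * lambda2 (normalized B) := by gcongr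
    _ = Δ * lambda2 (normalized B) := by rw [Real.sq_sqrt hΔ0]

theorem lambda2_regularized_le_general (hn : 2 ≤ n) (hB : B.IsHermitian)
    (hr : ∀ i, ∑ j, B i j = r i) {δ Δ : ℝ} (hδ : 0 < δ) (hδr : ∀ i, δ ≤ r i) (hrΔ : ∀ i, r i ≤ Δ) :
    (∀ i, ∑ j, (B + diagonal fun v => Δ - r v) i j = Δ) ∧
      lambda2 (normalized (B + diagonal fun v => Δ - r v)) ≤
        lambda2 (normalized B) + (1 - δ / Δ) := by
  have hsum := sum_add_diagonal_sub hr Δ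
  refine ⟨hsum, ?_⟩
  have hδΔ : δ ≤ Δ := (hδr ⟨0, by omega⟩).trans (hrΔ _)
  have hΔ : 0 < Δ := hδ.trans_le hδΔ
  set S : Matrix (Fin n) (Fin n) ℝ := diagonal fun v => Δ - r v
  have hS : S.IsHermitian := isHermitian_diagonal _
  have hSnorm : ‖S‖ ≤ Δ - δ := l2_opNorm_diagonal_le (sub_nonneg.mpr hδΔ) fun i => by
    rw [Real.norm_of_nonneg (sub_nonneg.mpr (hrΔ i))]
    exact sub_le_sub_left (hδr i) Δ
  calc lambda2 (normalized (B + S)) = lambda2 (Δ⁻¹ • (B + S)) := by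
        rw [normalized_eq_inv_smul hΔ hsum]
    _ ≤ Δ⁻¹ * lambda2 (B + S) :=
        (lambda2_smul_le hn (hB.add hS) _).trans_eq (by rw [abs_of_pos (inv_pos.mpr hΔ)])
    _ ≤ Δ⁻¹ * (Δ * lambda2 (normalized B) + (Δ - δ)) := by
        gcongr
        exact (lambda2_add_le hn hB hS).trans (add_le_add
          (lambda2_le_mul_lambda2_normalized hn hB hr (fun i => hδ.trans_le (hδr i)) hrΔ)
          hSnorm)
    _ = lambda2 (normalized B) + (1 - δ / Δ) := by field_simp

end Normalized

/-- Regularization: for a connected simple graph on `n ≥ 2` vertices with adjacency matrix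
`A`, minimum degree `δ ≥ 1`, maximum degree `Δ`, and `Δ/δ ≤ 8/7`, adding the diagonal matrix
`S` of weighted self-loops `S i i = Δ − deg(vᵢ)` makes all row sums of `A + S` equal to `Δ`,
and `λ₂` of the normalized version of `A + S` is at most `λ₂` of the normalized version of
`A`, plus `6/7`. -/
theorem lambda2_regularized_le {n : ℕ} (hn : 2 ≤ n)
    (G : SimpleGraph (Fin n)) [DecidableRel G.Adj] (hconn : G.Connected)
    (hδ : 1 ≤ G.minDegree)
    (hratio : (G.maxDegree : ℝ) / (G.minDegree : ℝ) ≤ 8 / 7) :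
    (∀ i, ∑ j, (G.adjMatrix ℝ +
        Matrix.diagonal fun v => (G.maxDegree : ℝ) - (G.degree v : ℝ)) i j =
      (G.maxDegree : ℝ)) ∧
    lambda2 (normalized (G.adjMatrix ℝ +
        Matrix.diagonal fun v => (G.maxDegree : ℝ) - (G.degree v : ℝ))) ≤
      lambda2 (normalized (G.adjMatrix ℝ)) + 6 / 7 := by
  have hδ' : (0 : ℝ) < G.minDegree := by exact_mod_cast hδ
  have hΔ : (0 : ℝ) < G.maxDegree := hδ'.trans_le (mod_cast G.minDegree_le_maxDegree)
  have hδΔ : (7 / 8 : ℝ) ≤ G.minDegree / G.maxDegree := by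
    simpa only [inv_div] using inv_anti₀ (div_pos hΔ hδ') hratio
  exact (lambda2_regularized_le_general hn (G.isHermitian_adjMatrix ℝ)
    (fun i => (G.degree_eq_sum_if_adj i).symm) hδ' (fun i => mod_cast G.minDegree_le_degree i)
    (fun i => mod_cast G.degree_le_maxDegree i)).imp_right fun h => h.trans (by linarith)
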